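/- Let d ≥ 1 and p ≥ 2 be integers. Let u be a real polynomial in d variables of degree at most p in each variable, and let v be the unique real polynomial in d variables of degree at most p−1 in each variable that agrees with u at every point of the grid {x_1, …, x_p}^d of Gauss–Lobatto nodes. Then ∫_{[−1,1]^d} |∇v(x)|² dx ≤ (2 + 4/(2p−3))^{d−1} ∫_{[−1,1]^d} |∇u(x)|² dx, where |∇w|² denotes the sum of the squares of the d partial derivatives of w. -/

import Mathlib

open Polynomial

/-- The `n`-th Legendre polynomial, given by the Rodrigues formula
`P_n(x) = 1/(2^n n!) dⁿ/dxⁿ (x² − 1)ⁿ`, normalized so that `P_n(1) = 1`. -/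
noncomputable def legendre (n : ℕ) : Polynomial ℝ :=
  Polynomial.C (1 / (2 ^ n * (n.factorial : ℝ))) *
    (⇑(Polynomial.derivative (R := ℝ)))^[n] ((Polynomial.X ^ 2 - 1) ^ n)

/-- The polynomial `χ_p(x) = P_{p−1}'(x) (x² − 1)`, whose roots are the `p`
Gauss–Lobatto nodes. -/
noncomputable def lobattoChi (p : ℕ) : Polynomial ℝ :=
  Polynomial.derivative (legendre (p - 1)) * (Polynomial.X ^ 2 - 1)

open MeasureTheory

set_option linter.unusedSimpArgs false

lemma w_ode_aux (n k : ℕ) :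
    (X ^ 2 - 1 : ℝ[X]) * derivative^[k + 2] ((X ^ 2 - 1 : ℝ[X]) ^ n) =
      C (2 * ((n : ℝ) - k - 1)) * (X * derivative^[k + 1] ((X ^ 2 - 1 : ℝ[X]) ^ n)) +
      C (((k : ℝ) + 1) * (2 * n - k)) * derivative^[k] ((X ^ 2 - 1 : ℝ[X]) ^ n) := by
  have h0 : (X ^ 2 - 1 : ℝ[X]) * derivative ((X ^ 2 - 1 : ℝ[X]) ^ n) =
      C (2 * (n : ℝ)) * (X * (X ^ 2 - 1 : ℝ[X]) ^ n) := by
    rcases n with _ | n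
    · simp
    · rw [derivative_pow]
      simp only [derivative_sub, derivative_X_pow, derivative_one, Nat.add_sub_cancel]
      simp only [map_mul, map_natCast, map_ofNat]
      push_cast
      ring
  induction k with
  | zero =>
    have h1 := congrArg derivative h0
    simp only [derivative_mul, derivative_sub, derivative_X_pow, derivative_one, derivative_C,
      derivative_X] at h1
    simp only [Function.iterate_succ_apply', Function.iterate_zero, id, map_mul, map_natCast,
      map_ofNat, map_sub, map_add, map_one, Nat.cast_zero, map_zero] at h1 ⊢
    push_cast at h1
    linear_combination h1
  | succ k ih =>
    have h1 := congrArg derivative ih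
    simp only [derivative_mul, derivative_add, derivative_sub, derivative_X_pow, derivative_one,
      derivative_C, derivative_X, ← Function.iterate_succ_apply' (⇑derivative)] at h1
    simp only [map_mul, map_natCast, Nat.succ_eq_add_one,
      map_ofNat, map_sub, map_add, map_one, Nat.cast_add, Nat.cast_one] at h1 ⊢
    push_cast at h1
    rw [show k + 1 + 2 = k + 2 + 1 from rfl, show k + 1 + 1 = k + 2 from rfl]
    rw [show k + 1 + 1 = k + 2 from rfl] at h1
    linear_combination h1

lemma legendre_ode (n : ℕ) :
    derivative (derivative (legendre n) * (X ^ 2 - 1)) = C ((n : ℝ) * (n + 1)) * legendre n := by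
  have h := w_ode_aux n n
  unfold legendre
  simp only [derivative_mul, derivative_sub, derivative_X_pow, derivative_one,
      derivative_C, derivative_X, ← Function.iterate_succ_apply' (⇑derivative)]
  simp only [Nat.succ_eq_add_one, zero_mul, zero_add, derivative_mul, derivative_C,
    ← Function.iterate_succ_apply' (⇑derivative)]
  rw [show n + 1 + 1 = n + 2 from rfl]
  generalize C (1 / (2 ^ n * (n.factorial : ℝ))) = c
  simp only [map_mul, map_natCast, map_ofNat, map_sub, map_add, map_one] at h ⊢
  push_cast
  linear_combination c * h

lemma legendre_zero : legendre 0 = 1 := by simp [legendre]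

lemma legendre_one : legendre 1 = X := by
  simp only [legendre, Function.iterate_one, pow_one, derivative_sub, derivative_X_pow,
    derivative_one, Nat.factorial_one]
  simp only [← mul_assoc, sub_zero, ← C_mul]
  norm_num

lemma legendre_rec (n : ℕ) :
    derivative (legendre (n + 2)) = derivative (legendre n) +
      C (2 * (n : ℝ) + 3) * legendre (n + 1) := by
  have h : derivative^[2] ((X ^ 2 - 1 : ℝ[X]) ^ (n + 2)) =
      C (2 * (n + 2 : ℝ) * (2 * n + 3)) * (X ^ 2 - 1 : ℝ[X]) ^ (n + 1) +
      C (4 * (n + 2 : ℝ) * (n + 1)) * (X ^ 2 - 1 : ℝ[X]) ^ n := by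
    simp only [Function.iterate_succ_apply', Function.iterate_zero, id, derivative_pow,
      derivative_mul, derivative_sub, derivative_X, derivative_one, derivative_C,
      Nat.add_sub_cancel, map_mul, map_natCast, map_ofNat, map_sub, map_add, map_one]
    simp only [show n + 2 - 1 = n + 1 from rfl, Nat.add_sub_cancel]
    push_cast
    simp [derivative_pow, C_ofNat, C_add]
    ring
  have h2 := congrArg (derivative^[n + 1]) h
  rw [← Function.iterate_add_apply, iterate_map_add, iterate_derivative_C_mul,
    iterate_derivative_C_mul] at h2
  unfold legendre
  simp only [derivative_mul, derivative_C, zero_mul, zero_add,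
    ← Function.iterate_succ_apply' (⇑derivative), Nat.succ_eq_add_one]
  rw [show n + 2 + 1 = n + 1 + 2 from rfl, h2, mul_add, ← mul_assoc, ← mul_assoc, ← mul_assoc,
    ← C_mul, ← C_mul, ← C_mul, add_comm]
  have hf : ((n).factorial : ℝ) ≠ 0 := by exact_mod_cast n.factorial_ne_zero
  have hn1 : (n : ℝ) + 1 ≠ 0 := by positivity
  have hn2 : (n : ℝ) + 2 ≠ 0 := by positivity
  congr 3
  · simp only [Nat.factorial_succ]
    push_cast
    rw [show (n : ℝ) + 1 + 1 = n + 2 by ring]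
    field_simp
    try ring
  · simp only [Nat.factorial_succ]
    push_cast
    rw [show (n : ℝ) + 1 + 1 = n + 2 by ring]
    field_simp
    try ring

lemma legendre_deriv_eval (n : ℕ) (s : ℝ) (hs : s ^ 2 = 1) :
    2 * s * (derivative (legendre n)).eval s = n * (n + 1) * (legendre n).eval s := by
  have h := congrArg (eval s) (legendre_ode n)
  simp only [derivative_mul, derivative_sub, derivative_X_pow, derivative_one, eval_add, eval_mul,
    eval_sub, eval_pow, eval_X, eval_one, eval_C, hs] at h
  simp at h
  linarith

lemma legendre_eval (s : ℝ) (hs : s ^ 2 = 1) (n : ℕ) :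
    (legendre n).eval s = s ^ n := by
  induction n using Nat.strong_induction_on with
  | _ n ih =>
    rcases n with _ | _ | n
    · simp [legendre_zero]
    · simp [legendre_one]
    · have h1 := ih n (by omega)
      have h2 := ih (n + 1) (by omega)
      have e := congrArg (eval s) (legendre_rec n)
      simp only [eval_add, eval_mul, eval_C] at e
      have d1 := legendre_deriv_eval n s hs
      have d2 := legendre_deriv_eval (n + 2) s hs
      rw [e] at d2
      rw [h1] at d1
      rw [h2] at d2
      push_cast at d2
      have : ((n : ℝ) + 2) * (n + 3) ≠ 0 := by positivity
      rw [show n + 1 + 1 = n + 2 from rfl]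
      refine mul_left_cancel₀ this ?_
      have hs2 : s ^ (n + 2) = s ^ n := by rw [pow_add, hs, mul_one]
      have hs3 : s * s ^ (n + 1) = s ^ n := by rw [← hs2]; ring
      rw [hs2]
      linear_combination -d2 + d1 + 2 * (2 * (n : ℝ) + 3) * hs3

lemma legendre_natDegree_le (n : ℕ) : (legendre n).natDegree ≤ n := by
  unfold legendre
  refine (natDegree_C_mul_le _ _).trans ?_
  refine (natDegree_iterate_derivative _ _).trans ?_
  have : ((X ^ 2 - 1 : ℝ[X]) ^ n).natDegree ≤ n * 2 := by
    refine natDegree_pow_le.trans ?_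
    gcongr
    compute_degree
  omega

lemma legendre_natDegree (n : ℕ) : (legendre n).natDegree = n := by
  unfold legendre
  rw [natDegree_C_mul (by positivity)]
  refine le_antisymm ?_ ?_
  · have := legendre_natDegree_le n
    unfold legendre at this
    rwa [natDegree_C_mul (by positivity)] at this
  · refine le_natDegree_of_ne_zero ?_
    rw [coeff_iterate_derivative]
    have hm : ((X ^ 2 - 1 : ℝ[X]) ^ n).Monic := by
      refine Monic.pow ?_ _
      monicity!
    have hd : ((X ^ 2 - 1 : ℝ[X]) ^ n).natDegree = n + n := by
      rw [natDegree_pow]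
      have : (X ^ 2 - 1 : ℝ[X]).natDegree = 2 := by compute_degree!
      rw [this]; omega
    rw [← hd, hm.coeff_natDegree, hd]
    simp [Nat.descFactorial_eq_zero_iff_lt]

lemma ibp (f g : ℝ[X]) (h : ∀ s : ℝ, s ^ 2 = 1 → f.eval s = 0) :
    ∫ t in (-1 : ℝ)..1, f.derivative.eval t * g.eval t =
      - ∫ t in (-1 : ℝ)..1, f.eval t * g.derivative.eval t := by
  have := intervalIntegral.integral_deriv_mul_eq_sub (a := -1) (b := 1)
    (u := fun t => f.eval t) (v := fun t => g.eval t)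
    (u' := fun t => f.derivative.eval t) (v' := fun t => g.derivative.eval t)
    (fun x _ => f.hasDerivAt x) (fun x _ => g.hasDerivAt x)
    (f.derivative.continuous.intervalIntegrable _ _)
    (g.derivative.continuous.intervalIntegrable _ _)
  rw [h 1 (by norm_num), h (-1) (by norm_num), intervalIntegral.integral_add] at this
  · linarith
  · exact (f.derivative.continuous.mul g.continuous).intervalIntegrable _ _
  · exact (f.continuous.mul g.derivative.continuous).intervalIntegrable _ _

/-- inner product -/
noncomputable def ipL : ℝ[X] →ₗ[ℝ] ℝ where
  toFun f := ∫ t in (-1 : ℝ)..1, f.eval t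
  map_add' f g := by
    simp only [eval_add]
    exact intervalIntegral.integral_add (f.continuous.intervalIntegrable _ _)
      (g.continuous.intervalIntegrable _ _)
  map_smul' c f := by simp

lemma ipL_ibp (f g : ℝ[X]) (h : ∀ s : ℝ, s ^ 2 = 1 → f.eval s = 0) :
    ipL (derivative f * g) = - ipL (f * derivative g) := by
  simpa [ipL] using ibp f g h

lemma ipL_C_mul (c : ℝ) (f : ℝ[X]) : ipL (C c * f) = c * ipL f := by
  rw [← smul_eq_C_mul]; simp

lemma ipL_sq_nonneg (f : ℝ[X]) : 0 ≤ ipL (f ^ 2) := by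
  simp only [ipL, LinearMap.coe_mk, AddHom.coe_mk]
  refine intervalIntegral.integral_nonneg (by norm_num) fun t _ => ?_
  rw [eval_pow]; positivity

lemma legendre_selfadj (n : ℕ) (g : ℝ[X]) :
    (n * (n + 1) : ℝ) * ipL (legendre n * g) =
      ipL (legendre n * derivative ((X ^ 2 - 1) * derivative g)) := by
  have h1 := ipL_ibp (derivative (legendre n) * (X ^ 2 - 1)) g (by
    intro s hs; simp [hs])
  have h2 := ipL_ibp ((X ^ 2 - 1) * derivative g) (legendre n) (by
    intro s hs; simp [hs])
  rw [legendre_ode, mul_assoc, ipL_C_mul] at h1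
  rw [h1, mul_comm (legendre n), h2]
  congr 2
  ring

lemma legendre_orth_pow (n m : ℕ) (h : m < n) : ipL (legendre n * X ^ m) = 0 := by
  induction m using Nat.strong_induction_on with
  | _ m ih =>
    have key := legendre_selfadj n (X ^ m)
    have hd : derivative ((X ^ 2 - 1 : ℝ[X]) * derivative (X ^ m)) =
        C ((m : ℝ) * (m + 1)) * X ^ m - C ((m : ℝ) * (m - 1)) * X ^ (m - 2) := by
      rcases m with _ | _ | m
      · simp
      · simp
      · simp [derivative_mul, C_add]
        ring
    rw [hd, mul_sub, map_sub, mul_left_comm, mul_left_comm (legendre n), ipL_C_mul,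
      ipL_C_mul] at key
    have h0 : (m : ℝ) * (m - 1) * ipL (legendre n * X ^ (m - 2)) = 0 := by
      rcases m with _ | _ | m
      · simp
      · simp
      · rw [ih (m + 1 + 1 - 2) (by omega) (by omega), mul_zero]
    rw [h0] at key
    have hmn : (m : ℝ) + 1 ≤ n := by exact_mod_cast h
    have : ((n * (n + 1) : ℝ) - m * (m + 1)) * ipL (legendre n * X ^ m) = 0 := by linarith
    rcases mul_eq_zero.1 this with h | h
    · have : (0 : ℝ) ≤ m := by positivity
      nlinarith
    · exact h

lemma legendre_orth (n : ℕ) (f : ℝ[X]) (h : ∀ m, n ≤ m → f.coeff m = 0) :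
    ipL (legendre n * f) = 0 := by
  rw [f.as_sum_support, Finset.mul_sum, map_sum]
  refine Finset.sum_eq_zero fun i hi => ?_
  rw [← C_mul_X_pow_eq_monomial, mul_left_comm, ipL_C_mul, legendre_orth_pow, mul_zero]
  by_contra hc
  exact (mem_support_iff.1 hi) (h i (by omega))

lemma legendre_orth' (n : ℕ) (f : ℝ[X]) (h : f.natDegree < n) :
    ipL (legendre n * f) = 0 :=
  legendre_orth n f fun m hm => coeff_eq_zero_of_natDegree_lt (by omega)

lemma legendre_norm (n : ℕ) : ipL (legendre n ^ 2) = 2 / (2 * n + 1) := by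
  have h1 : ipL (derivative (X * legendre n ^ 2)) = 2 := by
    have : ∀ f : ℝ[X], ipL (derivative f) = f.eval 1 - f.eval (-1) := by
      intro f
      simp only [ipL, LinearMap.coe_mk, AddHom.coe_mk]
      exact intervalIntegral.integral_eq_sub_of_hasDerivAt (fun x _ => f.hasDerivAt x)
        (f.derivative.continuous.intervalIntegrable _ _)
    rw [this]
    simp only [eval_mul, eval_X, eval_pow]
    rw [legendre_eval 1 (by norm_num), legendre_eval (-1) (by norm_num), ← pow_mul, ← pow_mul, mul_comm n 2,
      pow_mul (-1 : ℝ)]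
    norm_num
  have h2 := legendre_orth n (X * derivative (legendre n) - C (n : ℝ) * legendre n) (by
    intro m hm
    rw [coeff_sub, coeff_C_mul]
    rcases m with _ | m
    · obtain rfl : n = 0 := by omega
      simp
    · rw [coeff_X_mul, coeff_derivative]
      rcases Nat.eq_or_lt_of_le hm with h | h
      · rw [h]; push_cast; ring
      · rw [coeff_eq_zero_of_natDegree_lt (lt_of_le_of_lt (legendre_natDegree_le n) h)]
        simp)
  have e1 : derivative (X * legendre n ^ 2) = legendre n ^ 2 + C 2 *
     (legendre n * (X * derivative (legendre n) - C (n : ℝ) * legendre n)) 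
     + C (2 * (n : ℝ)) * legendre n ^ 2 := by
    simp [derivative_mul, derivative_pow]
    rw [C_ofNat]; ring
  rw [e1, map_add, map_add, ipL_C_mul, ipL_C_mul, h2] at h1
  have : (2 * (n : ℝ) + 1) ≠ 0 := by positivity
  rw [eq_div_iff this]
  linarith

lemma legendre_ne_zero (n : ℕ) : legendre n ≠ 0 := by
  intro h
  have := legendre_eval 1 (by norm_num) n
  rw [h] at this
  simp at this

lemma chi_eq (n : ℕ) : lobattoChi (n + 2) =
    C (((n : ℝ) + 1) * (n + 2) / (2 * n + 3)) * (legendre (n + 2) - legendre n) := by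
  unfold lobattoChi
  rw [show n + 2 - 1 = n + 1 from rfl]
  have hd : derivative (derivative (legendre (n + 1)) * (X ^ 2 - 1) -
    C (((n : ℝ) + 1) * (n + 2) / (2 * n + 3)) * (legendre (n + 2) - legendre n)) = 0 := by
    rw [derivative_sub, legendre_ode, derivative_C_mul, derivative_sub, legendre_rec,
      add_sub_cancel_left, ← mul_assoc, ← C_mul, sub_eq_zero]
    congr 2
    push_cast
    have : (2 * (n : ℝ) + 3) ≠ 0 := by positivity
    field_simp
    ring
  obtain ⟨z, hc⟩ : ∃ z : ℝ, _ = C z := ⟨_, eq_C_of_derivative_eq_zero hd⟩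
  rw [← sub_eq_zero, hc]
  have he := congrArg (eval 1) hc
  simp only [eval_sub, eval_mul, eval_C, legendre_eval 1 (by norm_num), eval_pow, eval_X, eval_one]
    at he
  norm_num at he
  simp [← he]

/-- one-dimensional L2 bound -/
lemma oneD_L2 (p : ℕ) (hp : 2 ≤ p) (f : ℝ[X]) (hf : f.natDegree ≤ p - 1) (c : ℝ) :
    ipL (f ^ 2) ≤ (2 + 4 / (2 * (p : ℝ) - 3)) * ipL ((f + C c * lobattoChi p) ^ 2) := by
  obtain ⟨n, rfl⟩ := Nat.exists_eq_add_of_le' hp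
  rw [chi_eq, ← mul_assoc, ← C_mul]
  generalize c * (((n : ℝ) + 1) * (n + 2) / (2 * n + 3)) = e
  have hfo : ipL (legendre (n + 2) * f) = 0 := legendre_orth' _ _ (by omega)
  have hlo : ipL (legendre (n + 2) * legendre n) = 0 :=
    legendre_orth' _ _ (by have := legendre_natDegree_le n; omega)
  have hN := legendre_norm n
  have hM := legendre_norm (n + 2)
  push_cast at hM ⊢
  have hexp : (f + C e * (legendre (n + 2) - legendre n)) ^ 2 =
      f ^ 2 + C (2 * e) * (legendre (n + 2) * f) - C (2 * e) * (legendre n * f) +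
      C (e ^ 2) * (legendre (n + 2) ^ 2) + C (e ^ 2) * (legendre n ^ 2) -
      C (2 * e ^ 2) * (legendre (n + 2) * legendre n) := by
    simp only [C_mul, C_pow, C_ofNat]
    ring
  simp only [hexp, map_add, map_sub, ipL_C_mul, hfo, hlo, hN, hM]
  set F := ipL (f ^ 2)
  set b := ipL (legendre n * f) with hb
  have hpos : (0 : ℝ) < 2 * n + 1 := by positivity
  have hpos2 : (0 : ℝ) < 2 * n + 5 := by positivity
  have cs : b ^ 2 * (2 * n + 1) / 2 ≤ F := by
    have := ipL_sq_nonneg (f - C (b * (2 * n + 1) / 2) * legendre n)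
    have he : (f - C (b * (2 * n + 1) / 2) * legendre n) ^ 2 = f ^ 2
      - C (b * (2 * n + 1)) * (legendre n * f) + C ((b * (2 * n + 1) / 2) ^ 2) * legendre n ^ 2 := by
      have : C (b * (2 * n + 1)) = C 2 * C (b * (2 * n + 1) / 2) := by
        rw [← C_mul]; congr 1; ring
      rw [this, C_pow, C_ofNat]
      ring
    rw [he] at this
    simp only [map_add, map_sub, ipL_C_mul, hN, ← hb] at this
    have h2 : (b * (2 * n + 1) / 2) ^ 2 * (2 / (2 * n + 1)) = b ^ 2 * (2 * n + 1) / 2 := by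
      field_simp
    rw [h2] at this
    linarith
  have e1 : (2 + 4 / (2 * ((n : ℝ) + 2) - 3)) = (4 * n + 6) / (2 * n + 1) := by
    rw [show 2 * ((n : ℝ) + 2) - 3 = 2 * n + 1 by ring]
    field_simp; ring
  rw [e1, ← sub_nonneg]
  have key : 0 ≤ (2 * (n : ℝ) + 5) / (2 * n + 1) * (F - b ^ 2 * (2 * n + 1) / 2) +
      ((2 * (n : ℝ) + 5) * b - (8 * n + 12) * e / (2 * n + 1)) ^ 2 / (2 * (2 * n + 5)) := by
    have := sub_nonneg.2 cs
    positivity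
  refine key.trans (le_of_eq ?_)
  rw [show 2 * ((n : ℝ) + 2) + 1 = 2 * n + 5 by ring]
  field_simp
  ring

lemma oneD_H1 (p : ℕ) (hp : 2 ≤ p) (f : ℝ[X]) (hf : f.natDegree ≤ p - 2) (c : ℝ) :
    ipL (f ^ 2) ≤ ipL ((f + C c * derivative (lobattoChi p)) ^ 2) := by
  obtain ⟨n, rfl⟩ := Nat.exists_eq_add_of_le' hp
  unfold lobattoChi
  rw [show n + 2 - 1 = n + 1 from rfl, legendre_ode, ← mul_assoc, ← C_mul]
  generalize c * _ = e
  have hfo : ipL (legendre (n + 1) * f) = 0 := legendre_orth' _ _ (by omega)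
  have hexp : (f + C e * legendre (n + 1)) ^ 2 = f ^ 2 + C (2 * e) * (legendre (n + 1) * f)
      + C (e ^ 2) * legendre (n + 1) ^ 2 := by
    simp only [C_mul, C_pow, C_ofNat]; ring
  simp only [hexp, map_add, ipL_C_mul, hfo]
  have := ipL_sq_nonneg (legendre (n + 1))
  nlinarith [mul_nonneg (sq_nonneg e) this]

lemma chi_ne_zero (p : ℕ) (hp : 2 ≤ p) : lobattoChi p ≠ 0 := by
  obtain ⟨n, rfl⟩ := Nat.exists_eq_add_of_le' hp
  intro h
  have h1 := legendre_ode (n + 1)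
  unfold lobattoChi at h
  rw [show n + 2 - 1 = n + 1 from rfl] at h
  rw [h, derivative_zero] at h1
  have := mul_eq_zero.1 h1.symm
  rcases this with h | h
  · rw [C_eq_zero] at h
    have : ((n + 1 : ℕ) : ℝ) * ((n + 1 : ℕ) + 1) ≠ 0 := by positivity
    exact this h
  · exact legendre_ne_zero _ h

lemma chi_natDegree (p : ℕ) (hp : 2 ≤ p) : (lobattoChi p).natDegree = p := by
  have h0 := chi_ne_zero p hp
  unfold lobattoChi at h0 ⊢
  rw [natDegree_mul (left_ne_zero_of_mul h0) (right_ne_zero_of_mul h0), natDegree_derivative,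
    legendre_natDegree]
  have : (X ^ 2 - 1 : ℝ[X]).natDegree = 2 := by compute_degree!
  omega

lemma sq_sub_one_eq : (X ^ 2 - 1 : ℝ[X]) = (X - C 1) * (X - C (-1)) := by
  simp; ring

lemma sq_sub_one_roots : (X ^ 2 - 1 : ℝ[X]).roots = {1, -1} := by
  rw [sq_sub_one_eq, roots_mul, roots_X_sub_C, roots_X_sub_C]
  · rfl
  · exact mul_ne_zero (X_sub_C_ne_zero _) (X_sub_C_ne_zero _)

lemma chi_roots_card (p : ℕ) (hp : 2 ≤ p) : p ≤ (lobattoChi p).roots.card := by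
  have h0 := chi_ne_zero p hp
  unfold lobattoChi at h0 ⊢
  rw [roots_mul h0, Multiset.card_add, sq_sub_one_roots]
  have it : ∀ (k : ℕ) (f : ℝ[X]), f.roots.card ≤ (derivative^[k] f).roots.card + k := by
    intro k
    induction k with
    | zero => intro f; simp
    | succ k ih =>
      intro f
      have := ih f
      have h2 := card_roots_le_derivative (derivative^[k] f)
      rw [Function.iterate_succ_apply']
      omega
  unfold legendre
  rw [derivative_C_mul, roots_C_mul _ (by positivity), ← Function.iterate_succ_apply' (⇑derivative)]
  have h2 := it (p - 1).succ ((X ^ 2 - 1) ^ (p - 1))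
  rw [roots_pow, sq_sub_one_roots] at h2
  simp at h2 ⊢
  omega

lemma chi_rootMultiplicity (p : ℕ) (hp : 2 ≤ p) (x : ℝ) :
    (lobattoChi p).rootMultiplicity x ≤ 1 := by
  have h0 := chi_ne_zero p hp
  by_contra! hm
  have hroot : (lobattoChi p).IsRoot x := (rootMultiplicity_pos h0).1 (by omega)
  have h1 := derivative_rootMultiplicity_of_root hroot
  have hP : derivative (lobattoChi p) = C (((p - 1 : ℕ) : ℝ) * ((p - 1 : ℕ) + 1)) * legendre (p - 1) :=
    legendre_ode (p - 1)
  have hc : (((p - 1 : ℕ) : ℝ) * ((p - 1 : ℕ) + 1)) ≠ 0 := by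
    have : 0 < p - 1 := by omega
    positivity
  rw [hP, rootMultiplicity_mul (mul_ne_zero (by rwa [Ne, C_eq_zero]) (legendre_ne_zero _)),
    rootMultiplicity_C, zero_add] at h1
  have hr2 : (legendre (p - 1)).IsRoot x := (rootMultiplicity_pos (legendre_ne_zero _)).1 (by omega)
  have h2 := derivative_rootMultiplicity_of_root hr2
  have h3 : (lobattoChi p).rootMultiplicity x = (derivative (legendre (p - 1))).rootMultiplicity x +
      (X ^ 2 - 1 : ℝ[X]).rootMultiplicity x := by
    unfold lobattoChi at h0 ⊢
    exact rootMultiplicity_mul h0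
  have h4 : (X ^ 2 - 1 : ℝ[X]).rootMultiplicity x ≤ 1 := by
    rw [← count_roots, sq_sub_one_roots]
    refine Multiset.nodup_iff_count_le_one.1 ?_ x
    simp
    norm_num
  omega

lemma chi_roots (p : ℕ) (hp : 2 ≤ p) : p ≤ (lobattoChi p).roots.toFinset.card := by
  rw [Multiset.toFinset_card_of_nodup]
  · exact chi_roots_card p hp
  · refine Multiset.nodup_iff_count_le_one.2 fun x => ?_
    rw [count_roots]
    exact chi_rootMultiplicity p hp x

noncomputable def slice {d : ℕ} (x : Fin d → ℝ) (j : Fin d) : MvPolynomial (Fin d) ℝ →ₐ[ℝ] ℝ[X] :=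
  MvPolynomial.aeval (fun i => if i = j then (X : ℝ[X]) else C (x i))

lemma eval_slice {d : ℕ} (x : Fin d → ℝ) (j : Fin d) (f : MvPolynomial (Fin d) ℝ) (t : ℝ) :
    (slice x j f).eval t = MvPolynomial.eval (Function.update x j t) f := by
  induction f using MvPolynomial.induction_on with
  | C a => simp [slice]
  | add p q hp hq => rw [map_add, eval_add, map_add, hp, hq]
  | mul_X p i hp =>
    rw [map_mul, eval_mul, map_mul, hp]
    congr 1
    by_cases h : i = j
    · subst h; simp [slice]
    · simp [slice, h]

lemma natDegree_slice {d : ℕ} (x : Fin d → ℝ) (j : Fin d) (f : MvPolynomial (Fin d) ℝ) :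
    (slice x j f).natDegree ≤ f.degreeOf j := by
  unfold slice
  rw [MvPolynomial.aeval_def, MvPolynomial.eval₂_eq']
  refine natDegree_sum_le_of_forall_le _ _ fun m hm => ?_
  refine (natDegree_C_mul_le _ _).trans ?_
  refine (natDegree_prod_le _ _).trans ?_
  rw [Finset.sum_eq_single j]
  · simp only [if_true, natDegree_X_pow]
    exact MvPolynomial.le_degreeOf_of_mem_support j hm
  · intro b _ hb
    simp only [hb, if_false]
    rw [← C_pow, natDegree_C]
  · simp

lemma degreeOf_pderiv_self {d : ℕ} (j : Fin d) (f : MvPolynomial (Fin d) ℝ) :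
    (MvPolynomial.pderiv j f).degreeOf j ≤ f.degreeOf j - 1 := by
  rw [MvPolynomial.degreeOf_le_iff]
  intro m hm
  rw [MvPolynomial.mem_support_iff, MvPolynomial.coeff_pderiv] at hm
  have := MvPolynomial.le_degreeOf_of_mem_support j
    (MvPolynomial.mem_support_iff.2 (left_ne_zero_of_mul hm))
  simp at this
  omega

lemma degreeOf_pderiv_le {d : ℕ} (i j : Fin d) (f : MvPolynomial (Fin d) ℝ) :
    (MvPolynomial.pderiv i f).degreeOf j ≤ f.degreeOf j := by
  rw [MvPolynomial.degreeOf_le_iff]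
  intro m hm
  rw [MvPolynomial.mem_support_iff, MvPolynomial.coeff_pderiv] at hm
  have := MvPolynomial.le_degreeOf_of_mem_support j
    (MvPolynomial.mem_support_iff.2 (left_ne_zero_of_mul hm))
  simp only [Finsupp.add_apply] at this
  omega

lemma degreeOf_aeval_X {d : ℕ} (i j : Fin d) (f : ℝ[X]) :
    (aeval (MvPolynomial.X j : MvPolynomial (Fin d) ℝ) f).degreeOf i ≤
      if i = j then f.natDegree else 0 := by
  rw [aeval_eq_sum_range]
  refine (MvPolynomial.degreeOf_sum_le _ _ _).trans ?_
  refine Finset.sup_le fun k hk => ?_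
  rw [MvPolynomial.smul_eq_C_mul]
  refine (MvPolynomial.degreeOf_C_mul_le _ _ _).trans ?_
  rw [Finset.mem_range] at hk
  split_ifs with h
  · subst h
    rw [MvPolynomial.degreeOf_X_self_pow]; omega
  · rw [MvPolynomial.degreeOf_X_pow_of_ne _ h]

lemma degreeOf_monomial_le {d : ℕ} (m : Fin d →₀ ℕ) (a : ℝ) (i : Fin d) :
    (MvPolynomial.monomial m a).degreeOf i ≤ m i := by
  by_cases ha : a = 0
  · simp [ha]
  · rw [MvPolynomial.degreeOf_monomial_eq _ _ ha]

lemma reduce_exists {d p : ℕ} (χ : ℝ[X]) (hχ0 : χ ≠ 0) (hχ : χ.natDegree = p) (hp : 1 ≤ p)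
    (j : Fin d) (D : Fin d → ℕ) (hD : D j ≤ p)
    (u : MvPolynomial (Fin d) ℝ) (hu : ∀ i, u.degreeOf i ≤ D i) :
    ∃ q w : MvPolynomial (Fin d) ℝ, q.degreeOf j = 0 ∧
      u = w + aeval (MvPolynomial.X j : MvPolynomial (Fin d) ℝ) χ * q ∧
      ∀ i, w.degreeOf i ≤ Function.update D j (p - 1) i := by
  rw [← MvPolynomial.support_sum_monomial_coeff u]
  refine Finset.sum_induction _ (fun u => ∃ q w : MvPolynomial (Fin d) ℝ, q.degreeOf j = 0 ∧
      u = w + aeval (MvPolynomial.X j : MvPolynomial (Fin d) ℝ) χ * q ∧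
      ∀ i, w.degreeOf i ≤ Function.update D j (p - 1) i) ?_ ?_ ?_
  · rintro a b ⟨q, w, h1, h2, h3⟩ ⟨q', w', h1', h2', h3'⟩
    refine ⟨q + q', w + w', ?_, ?_, fun i => ?_⟩
    · have := MvPolynomial.degreeOf_add_le j q q'
      rw [h1, h1'] at this
      simpa using this
    · rw [h2, h2']; ring
    · exact (MvPolynomial.degreeOf_add_le i w w').trans (max_le (h3 i) (h3' i))
  · exact ⟨0, 0, by simp, by simp, by simp⟩
  · intro m hm
    have hmD : ∀ i, m i ≤ D i := fun i =>
      (MvPolynomial.le_degreeOf_of_mem_support i hm).trans (hu i)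
    generalize MvPolynomial.coeff m u = a
    by_cases hj : m j ≤ p - 1
    · refine ⟨0, MvPolynomial.monomial m a, by simp, by simp, fun i => ?_⟩
      refine (degreeOf_monomial_le m a i).trans ?_
      by_cases h : i = j
      · subst h; simpa using hj
      · simpa [h] using hmD i
    · have hmp : m j = p := by have := hmD j; omega
      have hlc : χ.leadingCoeff ≠ 0 := leadingCoeff_ne_zero.2 hχ0
      have hred : (X ^ p - C χ.leadingCoeff⁻¹ * χ : ℝ[X]).natDegree ≤ p - 1 := by
        rw [natDegree_le_iff_coeff_eq_zero]
        intro N hN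
        rw [coeff_sub, coeff_X_pow, coeff_C_mul]
        rcases Nat.eq_or_lt_of_le (show p ≤ N by omega) with h | h
        · subst h
          rw [← hχ, coeff_natDegree]; simp [hlc]
        · rw [coeff_eq_zero_of_natDegree_lt (p := χ) (by omega)]
          simp; omega
      refine ⟨MvPolynomial.monomial (m.erase j) (a * χ.leadingCoeff⁻¹),
        aeval (MvPolynomial.X j : MvPolynomial (Fin d) ℝ) (X ^ p - C χ.leadingCoeff⁻¹ * χ) *
          MvPolynomial.monomial (m.erase j) a, ?_, ?_, fun i => ?_⟩
      · have := degreeOf_monomial_le (m.erase j) (a * χ.leadingCoeff⁻¹) j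
        simpa using this
      · have h1 : MvPolynomial.monomial m a = MvPolynomial.X j ^ p * MvPolynomial.monomial (m.erase j) a := by
          rw [MvPolynomial.X_pow_eq_monomial, MvPolynomial.monomial_mul, one_mul, ← hmp,
            Finsupp.single_add_erase]
        have h2 : MvPolynomial.monomial (m.erase j) (a * χ.leadingCoeff⁻¹) =
            MvPolynomial.C χ.leadingCoeff⁻¹ * MvPolynomial.monomial (m.erase j) a := by
          rw [MvPolynomial.C_mul_monomial, mul_comm]
        rw [h1, h2]
        simp only [map_sub, map_mul, map_pow, aeval_X, aeval_C, MvPolynomial.algebraMap_eq]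
        ring
      · refine (MvPolynomial.degreeOf_mul_le _ _ _).trans ?_
        have h1 := degreeOf_aeval_X i j (X ^ p - C χ.leadingCoeff⁻¹ * χ)
        have h2 := degreeOf_monomial_le (m.erase j) a i
        by_cases h : i = j
        · subst h
          simp at h1 h2 ⊢
          omega
        · rw [if_neg h] at h1
          rw [Finsupp.erase_ne h] at h2
          rw [Function.update_of_ne h]
          have := hmD i
          omega

abbrev cube (d : ℕ) : Set (Fin d → ℝ) := Set.univ.pi fun _ : Fin d => Set.Icc (-1 : ℝ) 1

lemma integrable_cube {d : ℕ} (g : (Fin d → ℝ) → ℝ) (hg : Continuous g) :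
    Integrable g (volume.restrict (cube d)) :=
  hg.continuousOn.integrableOn_compact (isCompact_univ_pi fun _ => isCompact_Icc)

lemma continuous_sq {d : ℕ} (f : MvPolynomial (Fin d) ℝ) :
    Continuous fun x => (MvPolynomial.eval x f) ^ 2 := by
  have := MvPolynomial.continuous_eval f
  fun_prop

lemma slice_lintegral {d : ℕ} (x : Fin d → ℝ) (j : Fin d) (f : MvPolynomial (Fin d) ℝ) :
    ∫⁻ t, ENNReal.ofReal ((MvPolynomial.eval (Function.update x j t) f) ^ 2)
      ∂(volume.restrict (Set.Icc (-1 : ℝ) 1)) = ENNReal.ofReal (ipL ((slice x j f) ^ 2)) := by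
  simp only [← eval_slice, ← eval_pow]
  rw [← ofReal_integral_eq_lintegral_ofReal]
  · congr 1
    simp only [ipL, LinearMap.coe_mk, AddHom.coe_mk]
    rw [intervalIntegral.integral_of_le (by norm_num), integral_Icc_eq_integral_Ioc]
  · exact (slice x j f ^ 2).continuous.continuousOn.integrableOn_compact isCompact_Icc
  · refine Filter.Eventually.of_forall fun t => ?_
    simp only [eval_pow]
    positivity

lemma fubini_step {d : ℕ} (j : Fin d) (f F : MvPolynomial (Fin d) ℝ) (K : ℝ) (hK : 0 ≤ K)
    (h : ∀ x, ipL ((slice x j f) ^ 2) ≤ K * ipL ((slice x j F) ^ 2)) :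
    ∫ x in cube d, (MvPolynomial.eval x f) ^ 2 ≤ K * ∫ x in cube d, (MvPolynomial.eval x F) ^ 2 := by
  rw [← integral_const_mul]
  have hF := (continuous_sq F)
  have hKF : Continuous fun x => K * (MvPolynomial.eval x F) ^ 2 := by fun_prop
  rw [← ENNReal.ofReal_le_ofReal_iff (integral_nonneg fun x => by positivity)]
  rw [ofReal_integral_eq_lintegral_ofReal (integrable_cube _ (continuous_sq f))
    (Filter.Eventually.of_forall fun x => by positivity)]
  rw [ofReal_integral_eq_lintegral_ofReal (integrable_cube _ hKF)
    (Filter.Eventually.of_forall fun x => by positivity)]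
  rw [cube, volume_pi, Measure.restrict_pi_pi]
  refine lintegral_le_of_lmarginal_le {j} ((continuous_sq f).measurable.ennreal_ofReal)
    (hKF.measurable.ennreal_ofReal) ?_
  rw [lmarginal_singleton, lmarginal_singleton]
  intro x
  simp only [ENNReal.ofReal_mul hK]
  rw [lintegral_const_mul', slice_lintegral, slice_lintegral, ← ENNReal.ofReal_mul hK]
  · exact ENNReal.ofReal_le_ofReal (h x)
  · exact ENNReal.ofReal_ne_top

lemma slice_const {d : ℕ} (x : Fin d → ℝ) (j : Fin d) (q : MvPolynomial (Fin d) ℝ)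
    (hq : q.degreeOf j = 0) : ∃ c, slice x j q = C c :=
  ⟨_, eq_C_of_natDegree_le_zero (by have := natDegree_slice x j q; omega)⟩

lemma slice_aeval {d : ℕ} (x : Fin d → ℝ) (j : Fin d) (χ : ℝ[X]) :
    slice x j (aeval (MvPolynomial.X j : MvPolynomial (Fin d) ℝ) χ) = χ := by
  rw [← aeval_algHom_apply]
  simp [slice]

lemma interp_step {d p : ℕ} (hp : 2 ≤ p) (j i : Fin d) (q w : MvPolynomial (Fin d) ℝ)
    (hq : q.degreeOf j = 0) (hw : w.degreeOf j ≤ p - 1) :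
    ∫ x in cube d, (MvPolynomial.eval x (MvPolynomial.pderiv i w)) ^ 2 ≤
      (if i = j then 1 else (2 + 4 / (2 * (p : ℝ) - 3))) *
      ∫ x in cube d, (MvPolynomial.eval x (MvPolynomial.pderiv i
        (w + aeval (MvPolynomial.X j : MvPolynomial (Fin d) ℝ) (lobattoChi p) * q))) ^ 2 := by
  have hp' : (2 : ℝ) ≤ p := by exact_mod_cast hp
  have hC : 0 ≤ 2 + 4 / (2 * (p : ℝ) - 3) := by
    have : 0 < 2 * (p : ℝ) - 3 := by linarith
    positivity
  refine fubini_step j _ _ _ (by split_ifs <;> [norm_num; exact hC]) fun x => ?_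
  rw [map_add, map_add, MvPolynomial.pderiv_mul, Derivation.map_aeval]
  split_ifs with h
  · subst h
    have hq0 : MvPolynomial.pderiv i q = 0 := by
      apply MvPolynomial.pderiv_eq_zero_of_notMem_vars
      intro hi
      obtain ⟨m, hm, him⟩ := MvPolynomial.mem_vars i |>.1 hi
      have := MvPolynomial.le_degreeOf_of_mem_support i hm
      rw [Finsupp.mem_support_iff] at him
      omega
    obtain ⟨c, hc⟩ := slice_const x i q hq
    rw [hq0, mul_zero, add_zero, MvPolynomial.pderiv_X_self, map_mul, smul_eq_mul, mul_one,
      slice_aeval, hc, one_mul, mul_comm _ (C c)]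
    refine oneD_H1 p hp _ ?_ c
    have h1 := natDegree_slice x i (MvPolynomial.pderiv i w)
    have h2 := degreeOf_pderiv_self i w
    omega
  · rw [MvPolynomial.pderiv_X_of_ne (Ne.symm h), smul_zero, zero_mul, zero_add, map_mul,
      slice_aeval]
    obtain ⟨c, hc⟩ := slice_const x j (MvPolynomial.pderiv i q)
      (by have := degreeOf_pderiv_le i j q; omega)
    rw [hc, mul_comm _ (C c)]
    refine oneD_L2 p hp _ ?_ c
    have h1 := natDegree_slice x j (MvPolynomial.pderiv i w)
    have h2 := degreeOf_pderiv_le i j w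
    omega

lemma interp_all {d p : ℕ} (hp : 2 ≤ p) (u : MvPolynomial (Fin d) ℝ)
    (hu : ∀ i, u.degreeOf i ≤ p) (S : Finset (Fin d)) :
    ∃ w : MvPolynomial (Fin d) ℝ, (∀ i, w.degreeOf i ≤ if i ∈ S then p - 1 else p) ∧
      (∀ x : Fin d → ℝ, (∀ i, (lobattoChi p).eval (x i) = 0) →
        MvPolynomial.eval x w = MvPolynomial.eval x u) ∧
      ∀ i, ∫ x in cube d, (MvPolynomial.eval x (MvPolynomial.pderiv i w)) ^ 2 ≤
        (2 + 4 / (2 * (p : ℝ) - 3)) ^ (S.erase i).card *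
          ∫ x in cube d, (MvPolynomial.eval x (MvPolynomial.pderiv i u)) ^ 2 := by
  have hp' : (2 : ℝ) ≤ p := by exact_mod_cast hp
  have hC : 0 ≤ 2 + 4 / (2 * (p : ℝ) - 3) := by
    have : 0 < 2 * (p : ℝ) - 3 := by linarith
    positivity
  induction S using Finset.induction_on with
  | empty => exact ⟨u, by simpa using hu, fun _ _ => rfl, by simp⟩
  | insert j S hj ih =>
    obtain ⟨w, hw1, hw2, hw3⟩ := ih
    obtain ⟨q, w', hq, hw, hw'⟩ := reduce_exists (lobattoChi p) (chi_ne_zero p hp)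
      (chi_natDegree p hp) (by omega) j (fun i => if i ∈ S then p - 1 else p) (by simp [hj]) w hw1
    refine ⟨w', fun i => ?_, fun x hx => ?_, fun i => ?_⟩
    · have := hw' i
      by_cases h : i = j
      · subst h; simpa using this
      · simpa [h] using this
    · rw [← hw2 x hx, hw, map_add, map_mul]
      have : MvPolynomial.eval x (aeval (MvPolynomial.X j : MvPolynomial (Fin d) ℝ) (lobattoChi p))
          = 0 := by
        have h1 := eval_slice x j (aeval (MvPolynomial.X j) (lobattoChi p)) (x j)
        rw [slice_aeval, hx j, Function.update_eq_self] at h1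
        exact h1.symm
      rw [this]; ring
    · have h1 := interp_step hp j i q w' hq (by simpa using hw' j)
      rw [← hw] at h1
      refine h1.trans ?_
      have h2 := hw3 i
      split_ifs with h
      · subst h
        rw [one_mul, Finset.erase_insert hj]
        rwa [Finset.erase_eq_of_notMem hj] at h2
      · rw [Finset.erase_insert_of_ne (Ne.symm h),
          Finset.card_insert_of_notMem (by simp [hj]), pow_succ', mul_assoc]
        exact mul_le_mul_of_nonneg_left h2 hC


/-- H¹-seminorm stability of tensor-product Gauss–Lobatto interpolation in `d`
dimensions: if `u` is a polynomial in `d` variables of degree at most `p` in each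
variable, and `v` is the polynomial of degree at most `p − 1` in each variable
agreeing with `u` at every point of the grid of Gauss–Lobatto nodes (the points all
of whose coordinates are roots of `χ_p`), then
`∫_{[−1,1]^d} |∇v|² ≤ (2 + 4/(2p−3))^{d−1} ∫_{[−1,1]^d} |∇u|²`. -/
theorem gauss_lobatto_interp_h1_stability_multi (d p : ℕ) (hd : 1 ≤ d) (hp : 2 ≤ p)
    (u v : MvPolynomial (Fin d) ℝ)
    (hu : ∀ i, u.degreeOf i ≤ p) (hv : ∀ i, v.degreeOf i ≤ p - 1)
    (hinterp : ∀ x : Fin d → ℝ, (∀ i, (lobattoChi p).eval (x i) = 0) →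
      MvPolynomial.eval x v = MvPolynomial.eval x u) :
    ∫ x in Set.univ.pi fun _ : Fin d => Set.Icc (-1 : ℝ) 1,
        ∑ i, (MvPolynomial.eval x (MvPolynomial.pderiv i v)) ^ 2 ≤
      (2 + 4 / (2 * (p : ℝ) - 3)) ^ (d - 1) *
        ∫ x in Set.univ.pi fun _ : Fin d => Set.Icc (-1 : ℝ) 1,
          ∑ i, (MvPolynomial.eval x (MvPolynomial.pderiv i u)) ^ 2 := by
  obtain ⟨w, hw1, hw2, hw3⟩ := interp_all hp u hu Finset.univ
  have hvw : v = w := by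
    rw [← sub_eq_zero]
    refine MvPolynomial.eq_zero_of_eval_zero_at_prod_finset (v - w)
      (fun _ => (lobattoChi p).roots.toFinset) (fun i => ?_) (fun x hx => ?_)
    · have h1 := MvPolynomial.degreeOf_sub_le i v w
      have h2 := hw1 i
      have h3 := hv i
      have h4 := chi_roots p hp
      simp only [Finset.mem_univ, if_true] at h2
      have := max_le h3 h2
      omega
    · have hx' : ∀ i, (lobattoChi p).eval (x i) = 0 := fun i => by
        have := hx i
        rw [Multiset.mem_toFinset, mem_roots (chi_ne_zero p hp)] at this
        exact this
      rw [map_sub, hinterp x hx', hw2 x hx', sub_self]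
  rw [integral_finset_sum _ fun i _ => integrable_cube _ (continuous_sq _),
    integral_finset_sum _ fun i _ => integrable_cube _ (continuous_sq _), Finset.mul_sum]
  refine Finset.sum_le_sum fun i _ => ?_
  have := hw3 i
  rw [Finset.card_erase_of_mem (Finset.mem_univ _), Finset.card_univ, Fintype.card_fin,
    ← hvw] at this
  exact this
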